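/- Let V = V₁ ⊕ V₂ be a real Banach space decomposed as a direct sum of two closed subspaces V₁ and V₂ with V₂ finite-dimensional, and let Φ : V → ℝ be a C¹ functional such that Φ(u) ≤ β for all u ∈ V₂ and Φ(u) ≥ α for all u ∈ V₁, where α, β ∈ ℝ. If Φ satisfies the local Palais–Smale condition (P.S.)_c for every c ∈ [α, β], then Φ admits a critical value c ∈ [α, β], i.e. there exists u ∈ V with Φ'(u) = 0 and α ≤ Φ(u) ≤ β. -/

import Mathlib

open Set Filter

/-!
Let `γ₀` be the inclusion of a large ball of `V₂ ≅ V ⧸ V₁`. Every continuous map `γ` of that ball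
uniformly close to `γ₀` still meets `V₁`: projected to `V ⧸ V₁` it moves no point by more than the
radius, so it vanishes somewhere by Brouwer's theorem. Hence `max (Φ ∘ γ) ≥ α`, while
`max (Φ ∘ γ₀) ≤ β`. Ekeland's principle applied to `γ ↦ max (Φ ∘ γ)` gives a `γ` which no small
deformation can improve at rate `σ`, so at some point of `γ` where the maximum is attained
`‖Φ'‖ ≤ σ`. Letting `σ → 0`, the levels of these points accumulate in `[α, β]`, where the
Palais–Smale condition applies.

Brouwer's theorem is obtained by the volume argument of Milnor and Rogers: if `g` is Lipschitz and
vanishes off `s`, then for small `t` the map `id + t g` is a bijection of `s`, so the polynomial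
`t ↦ ∫ₛ det (1 + t g')` is constantly equal to the volume of `s`. At `t = 1` this excludes a
retraction `id + g` of a ball onto its boundary, whose derivative is everywhere singular.
-/

section Brouwer

open MeasureTheory Metric

theorem image_eq_of_bijective_of_eqOn_compl {X : Type*} {f : X → X} {s : Set X}
    (hf : Function.Bijective f) (hs : EqOn f id sᶜ) : f '' s = s := by
  rw [← compl_inj_iff, ← image_compl_eq hf, hs.image_eq, image_id]

theorem nonempty_inter_frontier_of_isPreconnected {X : Type*} [TopologicalSpace X] {s t : Set X}
    (ht : IsPreconnected t) (hts : (t ∩ s).Nonempty) (htsc : (t ∩ sᶜ).Nonempty) :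
    (t ∩ frontier s).Nonempty := by
  by_contra hempty
  have hcover : t ⊆ interior s ∪ interior sᶜ := by
    intro x hx
    by_contra hxu
    rw [← compl_frontier_eq_union_interior, mem_compl_iff, not_not] at hxu
    exact hempty ⟨x, hx, hxu⟩
  have hs : (t ∩ interior s).Nonempty := by
    obtain ⟨x, hxt, hxs⟩ := hts
    exact ⟨x, hxt, (hcover hxt).resolve_right fun h => interior_subset h hxs⟩
  have hsc : (t ∩ interior sᶜ).Nonempty := by
    obtain ⟨x, hxt, hxs⟩ := htsc
    exact ⟨x, hxt, (hcover hxt).resolve_left fun h => hxs (interior_subset h)⟩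
  obtain ⟨x, -, hxs, hxsc⟩ := ht _ _ isOpen_interior isOpen_interior hcover hs hsc
  exact interior_subset hxsc (interior_subset hxs)

theorem bijective_id_add_of_lipschitzWith {F : Type*} [NormedAddCommGroup F] [NormedSpace ℝ F]
    [CompleteSpace F] {g : F → F} {K : NNReal} (hg : LipschitzWith K g) (hK : K < 1) :
    Function.Bijective fun x => x + g x := by
  have happrox : ApproximatesLinearOn (fun x => x + g x)
      (ContinuousLinearEquiv.refl ℝ F : F →L[ℝ] F) univ K := by
    rw [ApproximatesLinearOn.approximatesLinearOn_iff_lipschitzOnWith]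
    have hsub : (fun x => x + g x) - ((ContinuousLinearEquiv.refl ℝ F : F →L[ℝ] F) : F → F) = g :=
      funext fun x => add_sub_cancel_left x (g x)
    rw [hsub]
    exact hg.lipschitzOnWith
  have hsmall : Subsingleton F ∨
      K < ‖((ContinuousLinearEquiv.refl ℝ F).symm : F →L[ℝ] F)‖₊⁻¹ := by
    rcases subsingleton_or_nontrivial F with h | h
    · exact .inl h
    · exact .inr (by simpa using hK)
  exact ⟨injOn_univ.1 (happrox.injOn hsmall), happrox.surjective hsmall⟩

theorem lipschitzWith_of_lipschitzOnWith_of_eqOn_zero {F G : Type*} [NormedAddCommGroup F]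
    [NormedSpace ℝ F] [NormedAddCommGroup G] {g : F → G} {s : Set F} {K : NNReal}
    (hs : IsClosed s) (hg : LipschitzOnWith K g s) (hzero : EqOn g 0 (interior s)ᶜ) :
    LipschitzWith K g := by
  have cross : ∀ x ∈ s, ∀ y ∉ s, dist (g x) (g y) ≤ K * dist x y := by
    intro x hx y hy
    obtain ⟨z, hz, hzs⟩ := nonempty_inter_frontier_of_isPreconnected
      (convex_segment (𝕜 := ℝ) x y).isPreconnected ⟨x, left_mem_segment ℝ x y, hx⟩
      ⟨y, right_mem_segment ℝ x y, hy⟩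
    have hgz : g y = g z := by
      rw [hzero fun h => hy (interior_subset h), hzero hzs.2, Pi.zero_apply, Pi.zero_apply]
    have hxz : dist x z ≤ dist x y := by
      linarith [dist_add_dist_of_mem_segment hz, dist_nonneg (x := z) (y := y)]
    calc dist (g x) (g y) = dist (g x) (g z) := by rw [hgz]
      _ ≤ K * dist x z := hg.dist_le_mul x hx z (hs.frontier_subset hzs)
      _ ≤ K * dist x y := by gcongr
  refine LipschitzWith.of_dist_le_mul fun x y => ?_
  by_cases hx : x ∈ s <;> by_cases hy : y ∈ s
  · exact hg.dist_le_mul x hx y hy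
  · exact cross x hx y hy
  · simpa only [dist_comm] using cross y hy x hx
  · rw [hzero fun h => hx (interior_subset h), hzero fun h => hy (interior_subset h)]
    simpa using by positivity

variable {E : Type*} [NormedAddCommGroup E] [NormedSpace ℝ E] [FiniteDimensional ℝ E]

theorem det_one_add_pos_of_norm_lt_one {A : E →L[ℝ] E} (hA : ‖A‖ < 1) : 0 < (1 + A).det := by
  have : CompleteSpace E := FiniteDimensional.complete ℝ E
  have det_ne_zero : ∀ B ∈ ball (0 : E →L[ℝ] E) 1, (1 + B).det ≠ 0 := by
    intro B hB
    have hunit : IsUnit (1 + B) := by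
      simpa using isUnit_one_sub_of_norm_lt_one (x := -B) (by simpa using hB)
    exact ((hunit.map ContinuousLinearMap.toLinearMapRingHom).map LinearMap.det).ne_zero
  have hcont : ContinuousOn (fun B : E →L[ℝ] E => (1 + B).det) (ball 0 1) :=
    (ContinuousLinearMap.continuous_det.comp (by fun_prop)).continuousOn
  by_contra! hle
  obtain ⟨B, hB, hB0⟩ := (convex_ball (0 : E →L[ℝ] E) 1).isPreconnected.intermediate_value
    (mem_ball_zero_iff.2 hA) (mem_ball_self one_pos) hcont
    ⟨hle, by simp [ContinuousLinearMap.det]⟩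
  exact det_ne_zero B hB hB0

theorem exists_polynomial_eval_eq_det_one_add_smul (A : E →L[ℝ] E) :
    ∃ p : Polynomial ℝ, p.natDegree ≤ Module.finrank ℝ E ∧
      ∀ t : ℝ, p.eval t = (1 + t • A).det := by
  let b := Module.finBasis ℝ E
  let M := LinearMap.toMatrix b b (A : E →ₗ[ℝ] E)
  refine ⟨Matrix.det ((Polynomial.X : Polynomial ℝ) • M.map Polynomial.C +
    (1 : Matrix _ _ ℝ).map Polynomial.C), ?_, fun t => ?_⟩
  · simpa using Polynomial.natDegree_det_X_add_C_le M 1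
  · have htoMatrix : LinearMap.toMatrix b b ((1 + t • A : E →L[ℝ] E) : E →ₗ[ℝ] E) = 1 + t • M := by
      simp only [ContinuousLinearMap.toLinearMap_add, ContinuousLinearMap.toLinearMap_smul,
        map_add, map_smul, M]
      exact congrArg (· + _) (LinearMap.toMatrix_one b)
    rw [ContinuousLinearMap.det, ← LinearMap.det_toMatrix b, htoMatrix,
      ← Polynomial.coe_evalRingHom, RingHom.map_det]
    congr 1
    ext i j
    rcases eq_or_ne i j with rfl | hij
    · simp [add_comm (1 : ℝ), mul_comm t]
    · simp [hij, mul_comm t]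

theorem integral_polynomial_eval_eq_of_infinite {X : Type*} [MeasurableSpace X] {μ : Measure X}
    {p : X → Polynomial ℝ} {n : ℕ} {T : Set ℝ} {c : ℝ} (hdeg : ∀ x, (p x).natDegree ≤ n)
    (hT : T.Infinite) (hint : ∀ t ∈ T, Integrable (fun x => (p x).eval t) μ)
    (hc : ∀ t ∈ T, ∫ x, (p x).eval t ∂μ = c) (t : ℝ) : ∫ x, (p x).eval t ∂μ = c := by
  obtain ⟨s, hsT, hcard⟩ := hT.exists_subset_card_eq (n + 1)
  let w : ℝ → ℝ := fun i => (Lagrange.basis s id i).eval t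
  have eval_eq : ∀ x, (p x).eval t = ∑ i ∈ s, (p x).eval i * w i := by
    intro x
    have hlt : (p x).degree < s.card :=
      (Polynomial.degree_le_of_natDegree_le (hdeg x)).trans_lt (by rw [hcard]; norm_cast; omega)
    conv_lhs => rw [Lagrange.eq_interpolate (injOn_id _) hlt]
    simp [Lagrange.interpolate_apply, Polynomial.eval_finsetSum, w]
  have sum_weights : ∑ i ∈ s, w i = 1 := by
    rw [← Polynomial.eval_finsetSum,
      Lagrange.sum_basis (injOn_id _) (Finset.card_pos.1 (by omega)), Polynomial.eval_one]
  calc ∫ x, (p x).eval t ∂μ = ∑ i ∈ s, (∫ x, (p x).eval i ∂μ) * w i := by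
        simp_rw [eval_eq, ← integral_mul_const]
        exact integral_finsetSum _ fun i hi => (hint i (hsT hi)).mul_const _
    _ = c := by
        rw [Finset.sum_congr rfl fun i hi => by rw [hc i (hsT hi)], ← Finset.mul_sum, sum_weights,
          mul_one]

section Volume

variable [MeasurableSpace E] [BorelSpace E] (μ : Measure E) [μ.IsAddHaarMeasure]

theorem integrableOn_det_and_setIntegral_det_of_lipschitzWith_lt_one {g : E → E}
    {g' : E → E →L[ℝ] E} {K : NNReal} {s : Set E} (hs : MeasurableSet s) (hμs : μ s ≠ ⊤)
    (hg : LipschitzWith K g) (hK : K < 1) (hsupp : ∀ x ∉ s, g x = 0)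
    (hderiv : ∀ x ∈ s, HasFDerivAt g (g' x) x) :
    IntegrableOn (fun x => (1 + g' x).det) s μ ∧ ∫ x in s, (1 + g' x).det ∂μ = μ.real s := by
  have : CompleteSpace E := FiniteDimensional.complete ℝ E
  have hbij := bijective_id_add_of_lipschitzWith hg hK
  have himage : (fun x => x + g x) '' s = s :=
    image_eq_of_bijective_of_eqOn_compl hbij fun x hx => by simp [hsupp x hx]
  have hderiv' : ∀ x ∈ s, HasFDerivWithinAt (fun x => x + g x) (1 + g' x) s x := fun x hx =>
    ((hasFDerivAt_id x).add (hderiv x hx)).hasFDerivWithinAt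
  have habs : EqOn (fun x => |(1 + g' x).det| • (1 : ℝ)) (fun x => (1 + g' x).det) s := by
    intro x hx
    have hnorm : ‖g' x‖ < 1 := ((hderiv x hx).le_of_lipschitz hg).trans_lt hK
    simp [abs_of_pos (det_one_add_pos_of_norm_lt_one hnorm)]
  constructor
  · refine IntegrableOn.congr_fun ?_ habs hs
    rw [← integrableOn_image_iff_integrableOn_abs_det_fderiv_smul μ hs hderiv' hbij.1.injOn
      (fun _ => (1 : ℝ)), himage]
    exact integrableOn_const hμs
  · rw [← setIntegral_congr_fun hs habs, ← integral_image_eq_integral_abs_det_fderiv_smul μ hs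
      hderiv' hbij.1.injOn (fun _ => (1 : ℝ)), himage]
    simp

theorem setIntegral_det_one_add_of_lipschitzWith {g : E → E} {g' : E → E →L[ℝ] E} {K : NNReal}
    {s : Set E} (hs : MeasurableSet s) (hμs : μ s ≠ ⊤) (hg : LipschitzWith K g)
    (hsupp : ∀ x ∉ s, g x = 0) (hderiv : ∀ x ∈ s, HasFDerivAt g (g' x) x) :
    ∫ x in s, (1 + g' x).det ∂μ = μ.real s := by
  choose p hdeg heval using fun x => exists_polynomial_eval_eq_det_one_add_smul (g' x)
  have hK : (0 : ℝ) < K + 1 := by positivity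
  have small : ∀ t ∈ Ico (0 : ℝ) (K + 1)⁻¹,
      IntegrableOn (fun x => (p x).eval t) s μ ∧ ∫ x in s, (p x).eval t ∂μ = μ.real s := by
    intro t ht
    simp_rw [heval]
    refine integrableOn_det_and_setIntegral_det_of_lipschitzWith_lt_one μ hs hμs
      (g := t • g) (K := ‖t‖₊ * K) ((lipschitzWith_smul t).comp hg) ?_
      (fun x hx => by simp [hsupp x hx]) fun x hx => (hderiv x hx).const_smul t
    have htK : t * (K + 1) < 1 := (lt_inv_mul_iff₀' hK).1 (by simpa using ht.2)
    rw [← NNReal.coe_lt_coe]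
    simp only [NNReal.coe_mul, coe_nnnorm, Real.norm_of_nonneg ht.1, NNReal.coe_one]
    linarith [ht.1]
  have := integral_polynomial_eval_eq_of_infinite hdeg (Ico_infinite (inv_pos.2 hK))
    (fun t ht => (small t ht).1) (fun t ht => (small t ht).2) 1
  simpa only [heval, one_smul] using this

end Volume

theorem exists_det_fderiv_ne_zero_of_eqOn_frontier {r : E → E} {s : Set E} (hs : IsCompact s)
    (hconv : Convex ℝ s) (hint : (interior s).Nonempty) (hr : ContDiff ℝ 1 r)
    (hid : EqOn r id (frontier s)) : ∃ x ∈ interior s, (fderiv ℝ r x).det ≠ 0 := by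
  borelize E
  let g : E → E := (interior s).indicator (r - id)
  have hgs : EqOn g (r - id) s := by
    intro x hx
    by_cases hxi : x ∈ interior s
    · exact indicator_of_mem hxi _
    · have hxf : r x = x := hid ⟨subset_closure hx, hxi⟩
      simp [g, hxi, hxf]
  obtain ⟨K, hK⟩ : ∃ K, LipschitzOnWith K (r - id) s :=
    (hr.sub contDiff_id).contDiffOn.exists_lipschitzOnWith one_ne_zero hconv hs
  have hg : LipschitzWith K g := by
    refine lipschitzWith_of_lipschitzOnWith_of_eqOn_zero hs.isClosed ?_
      fun x hx => indicator_of_notMem hx _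
    exact fun x hx y hy => by simpa only [hgs hx, hgs hy] using hK hx hy
  have hderiv : ∀ x ∈ interior s, HasFDerivAt g (fderiv ℝ r x - 1) x := by
    intro x hx
    refine (((hr.differentiable one_ne_zero x).hasFDerivAt).sub
      (hasFDerivAt_id x)).congr_of_eventuallyEq ?_
    filter_upwards [isOpen_interior.mem_nhds hx] with y hy using hgs (interior_subset hy)
  have hfin : Measure.addHaar (interior s) ≠ ⊤ :=
    ((measure_mono interior_subset).trans_lt hs.measure_lt_top).ne
  have hvol := setIntegral_det_one_add_of_lipschitzWith Measure.addHaar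
    isOpen_interior.measurableSet hfin hg (fun x hx => indicator_of_notMem hx _) hderiv
  by_contra! hdet
  have hzero : Measure.addHaar.real (interior s) = 0 := by
    rw [← hvol]
    exact setIntegral_eq_zero_of_forall_eq_zero fun x hx => by rw [add_sub_cancel, hdet x hx]
  exact (ENNReal.toReal_pos (isOpen_interior.measure_pos _ hint).ne' hfin).ne' hzero

section InnerProduct

variable {H : Type*} [NormedAddCommGroup H] [InnerProductSpace ℝ H] [FiniteDimensional ℝ H]

theorem det_eq_zero_of_norm_eventually_eq {r : H → H} {r' : H →L[ℝ] H}
    {x : H} (hr : HasFDerivAt r r' x) (hx : r x ≠ 0) (hnorm : ∀ᶠ y in nhds x, ‖r y‖ = ‖r x‖) :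
    r'.det = 0 := by
  have horth : ∀ v, inner ℝ (r x) (r' v) = 0 := by
    intro v
    have hconst : HasFDerivAt (fun y => ‖r y‖ ^ 2) (0 : H →L[ℝ] ℝ) x :=
      (hasFDerivAt_const (‖r x‖ ^ 2) x).congr_of_eventuallyEq (hnorm.mono fun y hy => by simp [hy])
    simpa using DFunLike.congr_fun (hr.norm_sq.unique hconst) v
  by_contra hdet
  obtain ⟨v, hv⟩ := (LinearMap.equivOfDetNeZero (r' : H →ₗ[ℝ] H) hdet).surjective (r x)
  have hv' : r' v = r x := hv
  exact hx (inner_self_eq_zero.1 (hv' ▸ horth v))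

theorem not_contDiff_retraction_sphere {R : ℝ} (hR : 0 < R) {r : H → H}
    (hr : ContDiff ℝ 1 r) (hmaps : MapsTo r (closedBall 0 R) (sphere 0 R)) :
    ¬ EqOn r id (sphere 0 R) := by
  intro hid
  have hnorm : ∀ x ∈ ball 0 R, ‖r x‖ = R := fun x hx =>
    mem_sphere_zero_iff_norm.1 (hmaps (ball_subset_closedBall hx))
  obtain ⟨x, hxR, hx⟩ := exists_det_fderiv_ne_zero_of_eqOn_frontier (isCompact_closedBall (0 : H) R)
    (convex_closedBall 0 R) (by simp [interior_closedBall _ hR.ne', hR])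
    hr (by rwa [frontier_closedBall _ hR.ne'])
  rw [interior_closedBall _ hR.ne'] at hxR
  refine hx (det_eq_zero_of_norm_eventually_eq (hr.differentiable one_ne_zero x).hasFDerivAt ?_ ?_)
  · exact norm_pos_iff.1 (hnorm x hxR ▸ hR)
  · filter_upwards [isOpen_ball.mem_nhds hxR] with y hy
    rw [hnorm y hy, hnorm x hxR]

theorem exists_eq_self_of_contDiff_of_norm_lt {f : H → H} {R : ℝ}
    (hf : ContDiff ℝ 1 f) (hR : ∀ x, ‖f x‖ < R) : ∃ x, f x = x := by
  by_contra! hne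
  have hR0 : 0 < R := (norm_nonneg _).trans_lt (hR 0)
  let χ : ContDiffBump (0 : H) := ⟨R, R + 1, hR0, lt_add_one R⟩
  let q : H → H := fun x => x - χ x • f x
  have hq : ContDiff ℝ 1 q := contDiff_id.sub (χ.contDiff.smul hf)
  have hq0 : ∀ x, q x ≠ 0 := by
    intro x hqx
    have hx : x = χ x • f x := sub_eq_zero.1 hqx
    have hnorm : ‖x‖ ≤ ‖f x‖ := by
      conv_lhs => rw [hx, norm_smul, Real.norm_of_nonneg χ.nonneg]
      exact mul_le_of_le_one_left (norm_nonneg _) χ.le_one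
    have hχ : χ x = 1 := χ.one_of_mem_closedBall (by simpa using (hnorm.trans_lt (hR x)).le)
    exact hne x (by simpa [hχ] using hx.symm)
  have hqid : EqOn q id (sphere 0 (R + 1)) := by
    intro x hx
    have hχ : χ x = 0 := χ.zero_of_le_dist (mem_sphere.1 hx).ge
    simp [q, hχ]
  have hR1 : 0 < R + 1 := by linarith
  refine not_contDiff_retraction_sphere hR1 (r := fun x => ((R + 1) / ‖q x‖) • q x)
    ((contDiff_const.div (hq.norm ℝ hq0) fun x => norm_ne_zero_iff.2 (hq0 x)).smul hq)
    (fun x _ => ?_) fun x hx => ?_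
  · rw [mem_sphere_zero_iff_norm, norm_smul, norm_div, norm_norm, Real.norm_of_nonneg hR1.le,
      div_mul_cancel₀ _ (norm_ne_zero_iff.2 (hq0 x))]
  · simp [hqid hx, mem_sphere_zero_iff_norm.1 hx, hR1.ne']

theorem exists_eq_self_of_continuous_of_norm_le {f : H → H} {R : ℝ}
    (hf : Continuous f) (hR : ∀ x, ‖f x‖ ≤ R) : ∃ x, f x = x := by
  by_contra! hne
  obtain ⟨p, hp, hpf, -⟩ := hf.exists_contDiff_approx 1 (ε := fun x => min ‖f x - x‖ 1)
    (by fun_prop) fun x => lt_min (norm_pos_iff.2 (sub_ne_zero.2 (hne x))) one_pos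
  simp only [dist_eq_norm, lt_min_iff] at hpf
  obtain ⟨x, hx⟩ := exists_eq_self_of_contDiff_of_norm_lt hp (R := R + 1) fun x =>
    calc ‖p x‖ ≤ ‖f x‖ + ‖p x - f x‖ := norm_le_insert' _ _
      _ < R + 1 := add_lt_add_of_le_of_lt (hR x) (hpf x).2
  exact (hpf x).1.ne (by rw [hx, norm_sub_rev])

end InnerProduct

theorem exists_eq_self_of_boundedContinuousFunction (f : BoundedContinuousFunction E E) :
    ∃ x, f x = x := by
  let T : E ≃L[ℝ] EuclideanSpace ℝ (Fin (Module.finrank ℝ E)) := toEuclidean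
  obtain ⟨x, hx⟩ := exists_eq_self_of_continuous_of_norm_le (f := T ∘ f ∘ T.symm)
    (R := ‖T.toContinuousLinearMap‖ * ‖f‖) (by fun_prop) fun x =>
      T.toContinuousLinearMap.le_opNorm_of_le (f.norm_coe_le_norm _)
  exact ⟨T.symm x, T.injective (by simpa using hx)⟩

theorem exists_eq_zero_of_norm_sub_le {R : ℝ} (hR : 0 ≤ R) (f : C(closedBall (0 : E) R, E))
    (hf : ∀ x, ‖f x - x‖ ≤ R) : ∃ x, f x = 0 := by
  have : CompactSpace (closedBall (0 : E) R) :=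
    isCompact_iff_compactSpace.1 (isCompact_closedBall _ _)
  let h : BoundedContinuousFunction (closedBall (0 : E) R) E :=
    .mkOfCompact ⟨fun x => x - f x, by fun_prop⟩
  have hh : ‖h‖ ≤ R := (h.norm_le hR).2 fun x => by
    simpa [h, norm_sub_rev] using hf x
  obtain ⟨k, hk, hkh⟩ := h.exists_norm_eq_domRestrict_eq isClosed_closedBall ℝ
  obtain ⟨x, hx⟩ := exists_eq_self_of_boundedContinuousFunction k
  have hxR : x ∈ closedBall (0 : E) R := by
    rw [mem_closedBall_zero_iff, ← hx]
    exact (k.norm_coe_le_norm x).trans (hk.le.trans hh)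
  refine ⟨⟨x, hxR⟩, ?_⟩
  have : x - f ⟨x, hxR⟩ = x := (DFunLike.congr_fun hkh ⟨x, hxR⟩).symm.trans hx
  simpa using this

end Brouwer

section Ekeland

variable {X : Type*} [PseudoMetricSpace X] {J : X → ℝ} {σ : ℝ} {x y : X}

/-- The points below `x` in the Ekeland order: `y ≼ x` when moving from `x` to `y` lowers `J` by at
least `σ` times the distance travelled. -/
def ekelandLowerSet (J : X → ℝ) (σ : ℝ) (x : X) : Set X :=
  {y | J y + σ * dist x y ≤ J x}

theorem self_mem_ekelandLowerSet : x ∈ ekelandLowerSet J σ x := by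
  simp [ekelandLowerSet]

theorem ekelandLowerSet_subset_of_mem (hσ : 0 ≤ σ) (hy : y ∈ ekelandLowerSet J σ x) :
    ekelandLowerSet J σ y ⊆ ekelandLowerSet J σ x := by
  intro z hz
  have htriangle : σ * dist x z ≤ σ * dist x y + σ * dist y z := by
    rw [← mul_add]
    exact mul_le_mul_of_nonneg_left (dist_triangle x y z) hσ
  simp only [ekelandLowerSet, mem_ofPred_eq] at hy hz ⊢
  linarith

theorem isClosed_ekelandLowerSet (hJ : LowerSemicontinuous J) (x : X) :
    IsClosed (ekelandLowerSet J σ x) :=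
  LowerSemicontinuous.isClosed_preimage
    (hJ.add (Continuous.lowerSemicontinuous (f := fun y => σ * dist x y) (by fun_prop))) (J x)

theorem exists_mem_ekelandLowerSet_subset_closedBall (hJ : BddBelow (range J)) (hσ : 0 < σ) (x : X)
    {ε : ℝ} (hε : 0 < ε) :
    ∃ y ∈ ekelandLowerSet J σ x, ekelandLowerSet J σ y ⊆ Metric.closedBall y ε := by
  obtain ⟨_, ⟨y, hy, rfl⟩, hymin⟩ : ∃ a ∈ J '' ekelandLowerSet J σ x,
      a < sInf (J '' ekelandLowerSet J σ x) + σ * ε :=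
    exists_lt_of_csInf_lt ⟨J x, x, self_mem_ekelandLowerSet, rfl⟩
      (lt_add_of_pos_right _ (by positivity))
  refine ⟨y, hy, fun z hz => ?_⟩
  have hinf : sInf (J '' ekelandLowerSet J σ x) ≤ J z :=
    csInf_le (hJ.mono (image_subset_range _ _))
      ⟨z, ekelandLowerSet_subset_of_mem hσ.le hy hz, rfl⟩
  have hdist : J z + σ * dist y z ≤ J y := hz
  rw [Metric.mem_closedBall, dist_comm]
  exact le_of_mul_le_mul_left (by linarith) hσ

theorem exists_ekelandLowerSet_eq_singleton {X : Type*} [MetricSpace X] [CompleteSpace X]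
    {J : X → ℝ} (hJ : LowerSemicontinuous J) (hbdd : BddBelow (range J)) {σ : ℝ} (hσ : 0 < σ)
    (x₀ : X) : ∃ x ∈ ekelandLowerSet J σ x₀, ekelandLowerSet J σ x = {x} := by
  choose next next_mem next_small using fun (n : ℕ) (x : X) =>
    exists_mem_ekelandLowerSet_subset_closedBall hbdd hσ x
      (Nat.one_div_pos_of_nat (α := ℝ) (n := n))
  let u : ℕ → X := fun n => Nat.rec x₀ next n
  let S : ℕ → Set X := fun n => ekelandLowerSet J σ (u n)
  have hanti : Antitone S :=
    antitone_nat_of_succ_le fun n => ekelandLowerSet_subset_of_mem hσ.le (next_mem n (u n))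
  have hball : ∀ n, S (n + 1) ⊆ Metric.closedBall (u (n + 1)) (1 / (n + 1)) := fun n =>
    next_small n (u n)
  have hlim : Tendsto (fun n : ℕ => 2 * (1 / ((n : ℝ) + 1))) atTop (nhds 0) := by
    simpa using tendsto_one_div_add_atTop_nhds_zero_nat.const_mul (2 : ℝ)
  have hdiam : Tendsto (fun n => Metric.diam (S (n + 1))) atTop (nhds 0) :=
    squeeze_zero (fun _ => Metric.diam_nonneg)
      (fun n => Metric.diam_le_of_subset_closedBall (by positivity) (hball n)) hlim
  obtain ⟨x, hx⟩ := Metric.nonempty_iInter_of_nonempty_biInter (s := fun n => S (n + 1))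
    (fun n => isClosed_ekelandLowerSet hJ _)
    (fun n => Metric.isBounded_closedBall.subset (hball n))
    (fun N => ⟨u (N + 1), mem_iInter₂.2 fun n hn =>
      hanti (Nat.succ_le_succ hn) self_mem_ekelandLowerSet⟩) hdiam
  rw [mem_iInter] at hx
  refine ⟨x, hanti (Nat.zero_le 1) (hx 0), Subset.antisymm (fun y hy => ?_) ?_⟩
  · have hyS : ∀ n, y ∈ S (n + 1) := fun n => ekelandLowerSet_subset_of_mem hσ.le (hx n) hy
    have hdist : dist y x ≤ 0 := ge_of_tendsto' hdiam fun n =>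
      Metric.dist_le_diam_of_mem (Metric.isBounded_closedBall.subset (hball n)) (hyS n) (hx n)
    exact dist_le_zero.1 hdist
  · exact singleton_subset_iff.2 self_mem_ekelandLowerSet

end Ekeland

section Deformation

variable {V : Type*} [NormedAddCommGroup V] [NormedSpace ℝ V]

theorem exists_norm_le_one_apply_lt_neg {A : V →L[ℝ] ℝ} {σ : ℝ} (hA : σ < ‖A‖) :
    ∃ v : V, ‖v‖ ≤ 1 ∧ A v < -σ := by
  obtain ⟨v, hv, hAv⟩ := A.exists_lt_apply_of_lt_opNorm hA
  rcases lt_abs.1 hAv with h | h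
  · exact ⟨-v, by simpa using hv.le, by rw [map_neg]; linarith⟩
  · exact ⟨v, hv.le, by linarith⟩

theorem exists_continuousMap_apply_lt_neg {X : Type*} [TopologicalSpace X] [NormalSpace X]
    [ParacompactSpace X] {A : X → V →L[ℝ] ℝ} (hA : Continuous A) {s : Set X} (hs : IsClosed s)
    {σ : ℝ} (hsA : ∀ x ∈ s, σ < ‖A x‖) :
    ∃ h : C(X, V), ∀ x, ‖h x‖ ≤ 1 ∧ (x ∈ s → A x (h x) < -σ) := by
  refine exists_continuous_forall_mem_convex_of_local_const
    (t := fun x => {v | ‖v‖ ≤ 1 ∧ (x ∈ s → A x v < -σ)}) (fun x => ?_) fun x => ?_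
  · have hball : Convex ℝ {v : V | ‖v‖ ≤ 1} := by
      simpa only [Metric.closedBall, dist_zero_right] using convex_closedBall (0 : V) 1
    refine hball.inter (s := {v : V | ‖v‖ ≤ 1}) (t := {v | x ∈ s → A x v < -σ}) ?_
    by_cases hx : x ∈ s
    · simpa [hx] using convex_halfSpace_lt (A x).isLinear (-σ)
    · simpa [hx] using convex_univ
  · by_cases hx : x ∈ s
    · obtain ⟨v, hv, hAv⟩ := exists_norm_le_one_apply_lt_neg (hsA x hx)
      have hcont : Continuous fun y => A y v := by fun_prop
      exact ⟨v, (hcont.continuousAt.eventually_lt_const hAv).mono fun y hy => ⟨hv, fun _ => hy⟩⟩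
    · exact ⟨0, (hs.isOpen_compl.mem_nhds hx |> eventually_of_mem) fun y hy =>
        ⟨by simp, fun hys => absurd hys hy⟩⟩

theorem eventually_apply_add_smul_lt {ι : Type*} {l : Filter ι} {Φ : V → ℝ} {A : V →L[ℝ] ℝ}
    {u v : V} {c : ℝ} (hΦ : HasStrictFDerivAt Φ A u) (hc : A v < c) {a b : ι → V} {t : ι → ℝ}
    (ha : Tendsto a l (nhds u)) (hb : Tendsto b l (nhds v))
    (ht : Tendsto t l (nhdsWithin 0 (Ioi 0))) :
    ∀ᶠ i in l, Φ (a i + t i • b i) < Φ (a i) + t i * c := by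
  obtain ⟨ht0, htpos⟩ := tendsto_nhdsWithin_iff.1 ht
  have hpair : Tendsto (fun i => (a i + t i • b i, a i)) l (nhds (u, u)) := by
    simpa using (ha.add (ht0.smul hb)).prodMk_nhds ha
  have hlittle : (fun i => Φ (a i + t i • b i) - Φ (a i) - t i * A (b i)) =o[l] t := by
    have hbig : (fun i => t i • b i) =O[l] t := by
      simpa using (Asymptotics.isBigO_refl t l).smul (hb.isBigO_one ℝ)
    have := (hΦ.isLittleO.comp_tendsto hpair).trans_isBigO (by simpa [Function.comp_def] using hbig)
    simpa [Function.comp_def] using this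
  obtain ⟨c', hvc', hcc'⟩ := exists_between hc
  have hAb : ∀ᶠ i in l, A (b i) < c' := (A.continuous.tendsto v).comp hb |>.eventually_lt_const hvc'
  filter_upwards [hAb, htpos, Asymptotics.isLittleO_iff.1 hlittle (sub_pos.2 hcc')]
    with i hi hti hrem
  rw [Real.norm_of_nonneg (mem_Ioi.1 hti).le] at hrem
  have := (le_abs_self _).trans hrem
  nlinarith [mul_lt_mul_of_pos_left hi hti]

variable {Φ : V → ℝ} {Φ' : V → V →L[ℝ] ℝ} {K : Type*} [TopologicalSpace K] [CompactSpace K]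

theorem eventually_forall_apply_add_smul_lt (hderiv : ∀ u, HasStrictFDerivAt Φ (Φ' u) u)
    {γ h : C(K, V)} {M σ : ℝ} (hM : ∀ x, Φ (γ x) ≤ M)
    (hdesc : ∀ x, Φ (γ x) = M → Φ' (γ x) (h x) < -σ) :
    ∀ᶠ t in nhdsWithin (0 : ℝ) (Ioi 0), ∀ x, Φ (γ x + t • h x) < M - t * σ := by
  have hΦ : Continuous Φ := continuous_iff_continuousAt.2 fun u => (hderiv u).continuousAt
  have hlocal : ∀ x, ∀ᶠ z in nhdsWithin (0 : ℝ) (Ioi 0) ×ˢ nhds x,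
      Φ (γ z.2 + z.1 • h z.2) < M - z.1 * σ := by
    intro x
    rcases (hM x).lt_or_eq with hx | hx
    · have hcont : Continuous fun z : ℝ × K => Φ (γ z.2 + z.1 • h z.2) + z.1 * σ := by fun_prop
      have hnear : ∀ᶠ z in nhds ((0 : ℝ), x), Φ (γ z.2 + z.1 • h z.2) + z.1 * σ < M :=
        (hcont.tendsto _).eventually_lt_const (by simpa using hx)
      rw [nhds_prod_eq] at hnear
      exact (hnear.filter_mono (prod_mono nhdsWithin_le_nhds le_rfl)).mono fun z hz => by linarith
    · have hlt := eventually_apply_add_smul_lt (hderiv (γ x)) (hdesc x hx)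
        ((γ.continuous.tendsto x).comp tendsto_snd) ((h.continuous.tendsto x).comp tendsto_snd)
        (tendsto_fst (f := nhdsWithin (0 : ℝ) (Ioi 0)) (g := nhds x))
      filter_upwards [hlt] with z hz
      have := hM z.2
      simp only [Function.comp_apply] at hz
      linarith
  have huniform := isCompact_univ.mem_prod_nhdsSet_of_forall
    (s := {z : ℝ × K | Φ (γ z.2 + z.1 • h z.2) < M - z.1 * σ}) fun x _ => hlocal x
  rw [nhdsSet_univ] at huniform
  obtain ⟨p, hp, q, hq, hpq⟩ := mem_prod_iff.1 huniform
  obtain rfl := mem_top.1 hq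
  filter_upwards [hp] with t ht x using hpq (mk_mem_prod ht (mem_univ x))

theorem eventually_exists_dist_le_forall_lt [T2Space K]
    (hderiv : ∀ u, HasFDerivAt Φ (Φ' u) u) (hcont : Continuous Φ') {γ : C(K, V)} {M σ : ℝ}
    (hM : ∀ x, Φ (γ x) ≤ M) (hsteep : ∀ x, Φ (γ x) = M → σ < ‖Φ' (γ x)‖) :
    ∀ᶠ t in nhdsWithin (0 : ℝ) (Ioi 0),
      ∃ γ' : C(K, V), dist γ γ' ≤ t ∧ ∀ x, Φ (γ' x) < M - t * σ := by
  have hstrict : ∀ u, HasStrictFDerivAt Φ (Φ' u) u := fun u =>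
    hasStrictFDerivAt_of_hasFDerivAt_of_continuousAt (.of_forall hderiv) hcont.continuousAt
  have hΦ : Continuous Φ := continuous_iff_continuousAt.2 fun u => (hderiv u).continuousAt
  obtain ⟨h, hh⟩ := exists_continuousMap_apply_lt_neg (hcont.comp γ.continuous)
    (isClosed_eq (hΦ.comp γ.continuous) continuous_const) hsteep
  filter_upwards [eventually_forall_apply_add_smul_lt hstrict hM fun x => (hh x).2,
    self_mem_nhdsWithin] with t hlt ht
  refine ⟨γ + t • h, (ContinuousMap.dist_le (mem_Ioi.1 ht).le).2 fun x => ?_, hlt⟩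
  rw [ContinuousMap.add_apply, ContinuousMap.smul_apply, dist_self_add_right, norm_smul,
    Real.norm_of_nonneg (mem_Ioi.1 ht).le]
  exact mul_le_of_le_one_right (mem_Ioi.1 ht).le (hh x).1

end Deformation

section Minimax

variable {V : Type*} [NormedAddCommGroup V] {K : Type*} [TopologicalSpace K] [CompactSpace K]
  {Φ : V → ℝ}

theorem bddAbove_range_comp_continuousMap (hΦ : Continuous Φ) (γ : C(K, V)) :
    BddAbove (range fun x => Φ (γ x)) :=
  (isCompact_range (hΦ.comp γ.continuous)).bddAbove

theorem lowerSemicontinuous_iSup_comp_continuousMap (hΦ : Continuous Φ) :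
    LowerSemicontinuous fun γ : C(K, V) => ⨆ x, Φ (γ x) :=
  lowerSemicontinuous_ciSup (bddAbove_range_comp_continuousMap hΦ) fun x =>
    (hΦ.comp (continuous_eval_const x)).lowerSemicontinuous

theorem le_iSup_of_exists_le_comp (hΦ : Continuous Φ) {γ : C(K, V)} {α : ℝ}
    (h : ∃ x, α ≤ Φ (γ x)) : α ≤ ⨆ x, Φ (γ x) :=
  h.elim fun x hx => hx.trans (le_ciSup (bddAbove_range_comp_continuousMap hΦ γ) x)

theorem exists_forall_mem_closedBall_iSup_lt_of_ne [Nonempty K] [CompleteSpace V]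
    (hΦ : Continuous Φ) {γ₀ : C(K, V)} {α β σ ρ : ℝ} (hσ : 0 < σ) (hρ : 0 ≤ ρ)
    (hlow : ∀ γ ∈ Metric.closedBall γ₀ ρ, ∃ x, α ≤ Φ (γ x)) (hup : ∀ x, Φ (γ₀ x) ≤ β) :
    ∃ γ ∈ Metric.closedBall γ₀ ρ, ⨆ x, Φ (γ x) ≤ β - σ * dist γ₀ γ ∧
      ∀ γ' ∈ Metric.closedBall γ₀ ρ, γ' ≠ γ →
        ⨆ x, Φ (γ x) < (⨆ x, Φ (γ' x)) + σ * dist γ γ' := by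
  have : CompleteSpace (Metric.closedBall γ₀ ρ) := Metric.isClosed_closedBall.completeSpace_coe
  let J : Metric.closedBall γ₀ ρ → ℝ := fun γ => ⨆ x, Φ (γ.1 x)
  have hJ : LowerSemicontinuous J :=
    (lowerSemicontinuous_iSup_comp_continuousMap hΦ).comp continuous_subtype_val
  have hbdd : BddBelow (range J) :=
    ⟨α, forall_mem_range.2 fun γ => le_iSup_of_exists_le_comp hΦ (hlow γ γ.2)⟩
  obtain ⟨γ, hγ, hsingleton⟩ :=
    exists_ekelandLowerSet_eq_singleton hJ hbdd hσ ⟨γ₀, Metric.mem_closedBall_self hρ⟩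
  refine ⟨γ, γ.2, ?_, fun γ' hγ' hne => ?_⟩
  · have hdecrease : J γ + σ * dist γ₀ γ ≤ ⨆ x, Φ (γ₀ x) := hγ
    exact le_sub_iff_add_le.2 (hdecrease.trans (ciSup_le hup))
  · have hnotMem : (⟨γ', hγ'⟩ : Metric.closedBall γ₀ ρ) ∉ ekelandLowerSet J σ γ := by
      rw [hsingleton, mem_singleton_iff]
      exact fun h => hne (congrArg Subtype.val h)
    exact not_le.1 hnotMem

theorem exists_mem_Icc_norm_fderiv_le_of_forall_mem_closedBall [NormedSpace ℝ V]
    [CompleteSpace V] [T2Space K] {Φ' : V → V →L[ℝ] ℝ}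
    (hderiv : ∀ u, HasFDerivAt Φ (Φ' u) u) (hcont : Continuous Φ') {γ₀ : C(K, V)} {α β σ ρ : ℝ}
    (hσ : 0 < σ) (hρ : 0 ≤ ρ) (hσρ : β - α < σ * ρ)
    (hlow : ∀ γ ∈ Metric.closedBall γ₀ ρ, ∃ x, α ≤ Φ (γ x)) (hup : ∀ x, Φ (γ₀ x) ≤ β) :
    ∃ u, Φ u ∈ Icc α β ∧ ‖Φ' u‖ ≤ σ := by
  have hΦ : Continuous Φ := continuous_iff_continuousAt.2 fun u => (hderiv u).continuousAt
  have : Nonempty K := (hlow γ₀ (Metric.mem_closedBall_self hρ)).nonempty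
  obtain ⟨γ, hγ, hγβ, hmin⟩ := exists_forall_mem_closedBall_iSup_lt_of_ne hΦ hσ hρ hlow hup
  have hαγ : α ≤ ⨆ x, Φ (γ x) := le_iSup_of_exists_le_comp hΦ (hlow γ hγ)
  have hdist : dist γ₀ γ < ρ := lt_of_mul_lt_mul_left (by linarith) hσ.le
  have hγβ' : ⨆ x, Φ (γ x) ≤ β := hγβ.trans (sub_le_self _ (by positivity))
  by_contra! hsteep
  obtain ⟨t, ⟨γ', hγγ', hlt⟩, ht, htρ⟩ := ((eventually_exists_dist_le_forall_lt hderiv hcont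
    (le_ciSup (bddAbove_range_comp_continuousMap hΦ γ)) fun x hx =>
      hsteep (γ x) (hx ▸ ⟨hαγ, hγβ'⟩)).and (Ioo_mem_nhdsGT (sub_pos.2 hdist))).exists
  have hγ' : γ' ∈ Metric.closedBall γ₀ ρ := by
    rw [Metric.mem_closedBall']
    linarith [dist_triangle γ₀ γ γ']
  have hdrop : ⨆ x, Φ (γ' x) ≤ (⨆ x, Φ (γ x)) - t * σ := ciSup_le fun x => (hlt x).le
  have htσ : 0 < t * σ := mul_pos ht hσ
  have hne : γ' ≠ γ := by
    rintro rfl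
    linarith
  have := mul_le_mul_of_nonneg_left hγγ' hσ.le
  linarith [hmin γ' hγ' hne]

end Minimax

section PalaisSmale

variable {V : Type*} [NormedAddCommGroup V] [NormedSpace ℝ V] {Φ : V → ℝ} {Φ' : V → V →L[ℝ] ℝ}

/-- The local Palais–Smale condition `(P.S.)_c` for a functional `Φ` whose derivative `Φ'` is given
as a separate function, so that it can be stated without assuming differentiability. -/
def PalaisSmaleAt (Φ : V → ℝ) (Φ' : V → V →L[ℝ] ℝ) (c : ℝ) : Prop :=
  ∀ u : ℕ → V, Tendsto (fun n => Φ (u n)) atTop (nhds c) →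
    Tendsto (fun n => ‖Φ' (u n)‖) atTop (nhds 0) →
    ∃ φ : ℕ → ℕ, StrictMono φ ∧ ∃ v : V, Tendsto (u ∘ φ) atTop (nhds v)

theorem PalaisSmaleAt.exists_eq_zero {c : ℝ} (hPS : PalaisSmaleAt Φ Φ' c) (hΦ : Continuous Φ)
    (hcont : Continuous Φ') {u : ℕ → V} (hu : Tendsto (fun n => Φ (u n)) atTop (nhds c))
    (hu' : Tendsto (fun n => ‖Φ' (u n)‖) atTop (nhds 0)) : ∃ v, Φ' v = 0 ∧ Φ v = c := by
  obtain ⟨φ, hφ, v, hv⟩ := hPS u hu hu'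
  refine ⟨v, norm_eq_zero.1 ?_, ?_⟩
  · exact tendsto_nhds_unique ((hcont.norm.tendsto v).comp hv) (hu'.comp hφ.tendsto_atTop)
  · exact tendsto_nhds_unique ((hΦ.tendsto v).comp hv) (hu.comp hφ.tendsto_atTop)

theorem exists_eq_zero_mem_Icc_of_palaisSmaleAt (hΦ : Continuous Φ) (hcont : Continuous Φ')
    {α β : ℝ} (hPS : ∀ c ∈ Icc α β, PalaisSmaleAt Φ Φ' c)
    (happrox : ∀ ε > 0, ∃ u, Φ u ∈ Icc α β ∧ ‖Φ' u‖ ≤ ε) : ∃ u, Φ' u = 0 ∧ Φ u ∈ Icc α β := by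
  choose u hu hu' using fun n : ℕ => happrox (1 / ((n : ℝ) + 1)) Nat.one_div_pos_of_nat
  obtain ⟨c, hc, φ, hφ, hlim⟩ := isCompact_Icc.tendsto_subseq hu
  have hzero : Tendsto (fun n => ‖Φ' (u n)‖) atTop (nhds 0) :=
    squeeze_zero (fun _ => norm_nonneg _) hu' tendsto_one_div_add_atTop_nhds_zero_nat
  obtain ⟨v, hv, hvc⟩ := (hPS c hc).exists_eq_zero hΦ hcont (u := u ∘ φ) hlim
    (hzero.comp hφ.tendsto_atTop)
  exact ⟨v, hv, hvc ▸ hc⟩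

end PalaisSmale

section Linking

variable {V : Type*} [NormedAddCommGroup V] [NormedSpace ℝ V]

theorem exists_apply_eq_zero_of_dist_le {E : Type*} [NormedAddCommGroup E] [NormedSpace ℝ E]
    [FiniteDimensional ℝ E] {L : V →L[ℝ] E} {ι : E →L[ℝ] V} (hL : ∀ x, L (ι x) = x) {R ρ : ℝ}
    (hR : ‖L‖ * ρ ≤ R) (hρ : 0 ≤ ρ) (γ : C(Metric.closedBall (0 : E) R, V))
    (hγ : ∀ x, dist (γ x) (ι x) ≤ ρ) : ∃ x, L (γ x) = 0 := by
  refine exists_eq_zero_of_norm_sub_le ((by positivity : 0 ≤ ‖L‖ * ρ).trans hR)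
    ⟨fun x => L (γ x), by fun_prop⟩ fun x => ?_
  calc ‖L (γ x) - x‖ = ‖L (γ x - ι x)‖ := by rw [map_sub, hL]
    _ ≤ ‖L‖ * ρ := L.le_opNorm_of_le (by simpa only [dist_eq_norm] using hγ x)
    _ ≤ R := hR

theorem exists_continuousLinearMap_mkQL_apply_eq_of_codisjoint {W V₂ : Submodule ℝ V}
    [IsClosed (W : Set V)] [FiniteDimensional ℝ (V ⧸ W)] (h : Codisjoint W V₂) :
    ∃ ι : (V ⧸ W) →L[ℝ] V, ∀ x, W.mkQL (ι x) = x ∧ ι x ∈ V₂ := by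
  have hsurj : Function.Surjective (W.mkQ ∘ₗ V₂.subtype) := by
    intro x
    obtain ⟨u, rfl⟩ := W.mkQ_surjective x
    obtain ⟨w, v, hw, hv, rfl⟩ := Submodule.codisjoint_iff_exists_add_eq.1 h u
    exact ⟨⟨v, hv⟩, by simp [(Submodule.Quotient.mk_eq_zero W).2 hw]⟩
  obtain ⟨s, hs⟩ := LinearMap.exists_rightInverse_of_surjective _ (LinearMap.range_eq_top.2 hsurj)
  exact ⟨LinearMap.toContinuousLinearMap (V₂.subtype ∘ₗ s), fun x =>
    ⟨LinearMap.congr_fun hs x, (s x).2⟩⟩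

end Linking

section SaddlePoint

theorem finite_quotient_of_le {R M : Type*} [Ring R] [AddCommGroup M] [Module R M]
    {W₁ W₂ : Submodule R M} [Module.Finite R (M ⧸ W₁)] (h : W₁ ≤ W₂) : Module.Finite R (M ⧸ W₂) :=
  Module.Finite.of_surjective _ (Submodule.factor_surjective h)

variable {V : Type*} [NormedAddCommGroup V] [NormedSpace ℝ V]

theorem exists_mem_Icc_norm_fderiv_le_of_codisjoint [CompleteSpace V] {W V₂ : Submodule ℝ V}
    [IsClosed (W : Set V)] [FiniteDimensional ℝ (V ⧸ W)] (h : Codisjoint W V₂) {Φ : V → ℝ}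
    {Φ' : V → V →L[ℝ] ℝ} (hderiv : ∀ u, HasFDerivAt Φ (Φ' u) u) (hcont : Continuous Φ')
    {α β : ℝ} (hβ : ∀ u ∈ V₂, Φ u ≤ β) (hα : ∀ u ∈ W, α ≤ Φ u) {ε : ℝ} (hε : 0 < ε) :
    ∃ u, Φ u ∈ Icc α β ∧ ‖Φ' u‖ ≤ ε := by
  obtain ⟨ι, hι⟩ := exists_continuousLinearMap_mkQL_apply_eq_of_codisjoint h
  have hαβ : α ≤ β := (hα 0 W.zero_mem).trans (hβ 0 V₂.zero_mem)
  let ρ := (β - α) / ε + 1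
  let R := ‖W.mkQL‖ * ρ
  have hρ : 0 ≤ ρ := add_nonneg (div_nonneg (sub_nonneg.2 hαβ) hε.le) zero_le_one
  have hερ : β - α < ε * ρ := by
    rw [mul_add, mul_div_cancel₀ _ hε.ne', mul_one]
    exact lt_add_of_pos_right _ hε
  have : CompactSpace (Metric.closedBall (0 : V ⧸ W) R) :=
    isCompact_iff_compactSpace.1 (isCompact_closedBall _ _)
  let γ₀ : C(Metric.closedBall (0 : V ⧸ W) R, V) := ⟨fun x => ι x, by fun_prop⟩
  refine exists_mem_Icc_norm_fderiv_le_of_forall_mem_closedBall hderiv hcont hε hρ hερ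
    (γ₀ := γ₀) (fun γ hγ => ?_) fun x => hβ _ (hι x).2
  obtain ⟨x, hx⟩ := exists_apply_eq_zero_of_dist_le (fun x => (hι x).1) le_rfl hρ γ fun x =>
    (ContinuousMap.dist_apply_le_dist x).trans hγ
  exact ⟨x, hα _ ((Submodule.Quotient.mk_eq_zero W).1 hx)⟩

theorem silva_saddle_point_general [CompleteSpace V] {V₁ V₂ : Submodule ℝ V}
    [FiniteDimensional ℝ (V ⧸ V₁)] (h : Codisjoint V₁ V₂) {Φ : V → ℝ} {Φ' : V → V →L[ℝ] ℝ}
    (hderiv : ∀ u, HasFDerivAt Φ (Φ' u) u) (hcont : Continuous Φ') {α β : ℝ}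
    (hβ : ∀ u ∈ V₂, Φ u ≤ β) (hα : ∀ u ∈ V₁, α ≤ Φ u)
    (hPS : ∀ c ∈ Icc α β, PalaisSmaleAt Φ Φ' c) : ∃ u, Φ' u = 0 ∧ Φ u ∈ Icc α β := by
  have hΦ : Continuous Φ := continuous_iff_continuousAt.2 fun u => (hderiv u).continuousAt
  have hle : V₁ ≤ V₁.topologicalClosure := V₁.le_topologicalClosure
  have : IsClosed (V₁.topologicalClosure : Set V) := V₁.isClosed_topologicalClosure
  have := finite_quotient_of_le hle
  have hα' : ∀ u ∈ V₁.topologicalClosure, α ≤ Φ u := fun u hu =>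
    closure_minimal hα (isClosed_le continuous_const hΦ) hu
  exact exists_eq_zero_mem_Icc_of_palaisSmaleAt hΦ hcont hPS fun _ hε =>
    exists_mem_Icc_norm_fderiv_le_of_codisjoint (h.mono_left hle) hderiv hcont hβ hα' hε

end SaddlePoint

/-- **Silva's saddle point theorem with global estimates.**
Let `V = V₁ ⊕ V₂` be a real Banach space decomposed as a topological direct sum
of two closed subspaces with `V₂` finite-dimensional, and let `Φ : V → ℝ` be a
`C¹` functional with `Φ ≤ β` on `V₂` and `Φ ≥ α` on `V₁`. If `Φ` satisfies the
local Palais–Smale condition at every level `c ∈ [α, β]`, then `Φ` admits a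
critical value in `[α, β]`. -/
theorem silva_saddle_point
    {V : Type*} [NormedAddCommGroup V] [NormedSpace ℝ V] [CompleteSpace V]
    (V₁ V₂ : Submodule ℝ V)
    (hV₁closed : IsClosed (V₁ : Set V)) (hV₂closed : IsClosed (V₂ : Set V))
    (hcompl : IsCompl V₁ V₂) (hfin : FiniteDimensional ℝ V₂)
    (Φ : V → ℝ) (Φ' : V → (V →L[ℝ] ℝ))
    (hderiv : ∀ x, HasFDerivAt Φ (Φ' x) x) (hcont : Continuous Φ')
    (α β : ℝ)
    -- (a)
    (hβ : ∀ u ∈ V₂, Φ u ≤ β)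
    -- (b)
    (hα : ∀ u ∈ V₁, α ≤ Φ u)
    -- local Palais–Smale condition at every level `c ∈ [α, β]`
    (hPS : ∀ c ∈ Set.Icc α β, ∀ u : ℕ → V,
      Tendsto (fun n => Φ (u n)) atTop (nhds c) →
      Tendsto (fun n => ‖Φ' (u n)‖) atTop (nhds 0) →
      ∃ φ : ℕ → ℕ, StrictMono φ ∧ ∃ v : V, Tendsto (u ∘ φ) atTop (nhds v)) :
    ∃ u : V, Φ' u = 0 ∧ α ≤ Φ u ∧ Φ u ≤ β := by
  have : FiniteDimensional ℝ (V ⧸ V₁) :=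
    (V₁.quotientEquivOfIsCompl V₂ hcompl).symm.finiteDimensional
  exact silva_saddle_point_general hcompl.codisjoint hderiv hcont hβ hα hPS
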